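/- Let (A,Λ) be an associative form ring with 1, n ≥ 3, and let (I,Γ), (J,Δ) be form ideals of (A,Λ). Suppose 1 ≤ i ≤ n, a ∈ Γ, b ∈ Δ and r ∈ Λ. Then [T_{−i,i}(a), Z_{−i,i}(b,r)] ∈ [FU(2n,I,Γ), FU(2n,J,Δ)], where Z_{−i,i}(b,r) = T_{i,−i}(r')·T_{−i,i}(b)·T_{i,−i}(−r') with r' the element of λ^{−1}Λ corresponding to r (i.e. Z_{−i,i}(b,r) is the conjugate of T_{−i,i}(b) by the long root transvection at position (i,−i) with parameter taken from λ^{−(ε(i)+1)/2}Λ determined by r). -/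

import Mathlib

open Matrix
open scoped commutatorElement

/-- Bak's form ring data on a ring `A`: an involution `bar`, a central symmetry
`λ` with `λ λ̄ = 1`, and a form parameter `Λ`. -/
structure FormRingData (A : Type*) [Ring A] where
  bar : A →+ A
  bar_mul : ∀ a b : A, bar (a * b) = bar b * bar a
  bar_bar : ∀ a : A, bar (bar a) = a
  lam : A
  lam_comm : ∀ a : A, lam * a = a * lam
  lam_bar : lam * bar lam = 1
  Lambda : AddSubgroup A
  lambdaMin_mem : ∀ c : A, c - lam * bar c ∈ Lambda
  lambdaMax_mem : ∀ x ∈ Lambda, x = -(lam * bar x)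
  lambda_conj : ∀ (c : A), ∀ x ∈ Lambda, c * x * bar c ∈ Lambda

namespace FormRingData

variable {A : Type*} [Ring A]

/-- Integral powers of the symmetry `λ`; negative powers use `λ̄ = λ⁻¹`. -/
def lpow (D : FormRingData A) (k : ℤ) : A :=
  if 0 ≤ k then D.lam ^ k.toNat else (D.bar D.lam) ^ (-k).toNat

end FormRingData

/-- The index set `Ω = {1,…,n,−n,…,−1}`, coded as `Fin n × Bool`
(second component `true` = positive index). -/
abbrev Idx (n : ℕ) := Fin n × Bool

namespace Idx

/-- The involution `i ↦ −i` on indices. -/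
def neg {n : ℕ} (i : Idx n) : Idx n := (i.1, !i.2)

/-- The sign `ε(i) ∈ {±1}`. -/
def eps {n : ℕ} (i : Idx n) : ℤ := if i.2 then 1 else -1

theorem neg_ne {n : ℕ} (i : Idx n) : neg i ≠ i := by
  simp [neg, Prod.ext_iff]

theorem neg_injective {n : ℕ} : Function.Injective (neg (n := n)) := by
  intro i j h
  simp only [neg, Prod.mk.injEq] at h
  refine Prod.ext h.1 ?_
  have h2 := h.2
  cases hi : i.2 <;> cases hj : j.2 <;> simp_all

theorem neg_neg {n : ℕ} (i : Idx n) : neg (neg i) = i := by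
  simp [neg]

end Idx

/-- `GL(2n, A)`, realised as the units of the `Ω × Ω` matrix ring over `A`. -/
abbrev GLn (A : Type*) [Ring A] (n : ℕ) := (Matrix (Idx n) (Idx n) A)ˣ

section aux

theorem one_add_mul_one_sub {R : Type*} [Ring R] {X : R} (h : X * X = 0) :
    (1 + X) * (1 - X) = 1 := by
  have hh : (1 + X) * (1 - X) = 1 - X * X := by noncomm_ring
  rw [hh, h, sub_zero]

theorem one_sub_mul_one_add {R : Type*} [Ring R] {X : R} (h : X * X = 0) :
    (1 - X) * (1 + X) = 1 := by
  have hh : (1 - X) * (1 + X) = 1 - X * X := by noncomm_ring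
  rw [hh, h, sub_zero]

theorem stdBasisMatrix_neg' {A : Type*} [Ring A] {n : ℕ} (i j : Idx n) (c : A) :
    single i j (-c) = -single i j c := by
  refine eq_neg_of_add_eq_zero_left ?_
  rw [← Matrix.single_add]
  simp

end aux

namespace FormRingData

variable {A : Type*} [Ring A] {n : ℕ}

/-- The off-diagonal part of a short root element. -/
def Xmat (D : FormRingData A) (i j : Idx n) (c : A) : Matrix (Idx n) (Idx n) A :=
  single i j c -
    single (Idx.neg j) (Idx.neg i) (D.lpow ((Idx.eps j - Idx.eps i) / 2) * D.bar c)

theorem Xmat_mul (D : FormRingData A) {i j : Idx n} (hij : i ≠ j) (c c' : A) :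
    D.Xmat i j c * D.Xmat i j c' = 0 := by
  unfold Xmat
  rw [sub_mul, mul_sub, mul_sub,
    Matrix.single_mul_single_of_ne _ _ _ _ (Ne.symm hij),
    Matrix.single_mul_single_of_ne _ _ _ _ (Ne.symm (Idx.neg_ne j)),
    Matrix.single_mul_single_of_ne _ _ _ _ (Idx.neg_ne i),
    Matrix.single_mul_single_of_ne _ _ _ _ (fun h => hij (Idx.neg_injective h))]
  simp

theorem Xmat_neg (D : FormRingData A) (i j : Idx n) (c : A) :
    D.Xmat i j (-c) = -D.Xmat i j c := by
  unfold Xmat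
  rw [map_neg, mul_neg, stdBasisMatrix_neg', stdBasisMatrix_neg']
  abel

/-- The elementary short root unipotent `T_{ij}(c)`, for `i ≠ ±j`
(with junk value `1` when `i = j`). -/
def TS (D : FormRingData A) (i j : Idx n) (c : A) : GLn A n :=
  if h : i = j then 1 else
    { val := 1 + D.Xmat i j c
      inv := 1 + D.Xmat i j (-c)
      val_inv := by
        rw [D.Xmat_neg, ← sub_eq_add_neg]
        exact one_add_mul_one_sub (D.Xmat_mul h c c)
      inv_val := by
        rw [D.Xmat_neg, ← sub_eq_add_neg]
        exact one_sub_mul_one_add (D.Xmat_mul h c c) }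

/-- The elementary long root unipotent `T_{i,−i}(c)`. -/
def TL (D : FormRingData A) (i : Idx n) (c : A) : GLn A n where
  val := 1 + single i (Idx.neg i) c
  inv := 1 + single i (Idx.neg i) (-c)
  val_inv := by
    rw [stdBasisMatrix_neg', ← sub_eq_add_neg]
    exact one_add_mul_one_sub (Matrix.single_mul_single_of_ne _ _ _ _ (Idx.neg_ne i) _)
  inv_val := by
    rw [stdBasisMatrix_neg', ← sub_eq_add_neg]
    exact one_sub_mul_one_add (Matrix.single_mul_single_of_ne _ _ _ _ (Idx.neg_ne i) _)

/-- The elementary unitary transvection `T_{ij}(c)` (long or short root type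
according to whether `j = −i`). -/
def T (D : FormRingData A) (i j : Idx n) (c : A) : GLn A n :=
  if j = Idx.neg i then D.TL i c else D.TS i j c

/-- The elementary commutator `Y_{ij}(a,b) = [T_{ij}(a), T_{ji}(b)]`. -/
def Y (D : FormRingData A) (i j : Idx n) (a b : A) : GLn A n :=
  ⁅D.T i j a, D.T j i b⁆

/-- The elementary conjugate `Z_{ij}(a,c) = T_{ji}(c) T_{ij}(a) T_{ji}(−c)`. -/
def Z (D : FormRingData A) (i j : Idx n) (a c : A) : GLn A n :=
  D.T j i c * D.T i j a * D.T j i (-c)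

/-- The set of elementary unitary transvections of level `(I,Γ)`. -/
def transvGen (D : FormRingData A) (n : ℕ) (I Γ : AddSubgroup A) : Set (GLn A n) :=
  {x | ∃ i j : Idx n, i ≠ j ∧ i ≠ Idx.neg j ∧ ∃ c ∈ I, x = D.TS i j c} ∪
    {x | ∃ i : Idx n, ∃ g ∈ Γ, x = D.TL i (D.lpow (-(Idx.eps i + 1) / 2) * g)}

/-- The unrelative elementary subgroup `FU(2n, I, Γ)`. -/
def FU (D : FormRingData A) (n : ℕ) (I Γ : AddSubgroup A) : Subgroup (GLn A n) :=
  Subgroup.closure (D.transvGen n I Γ)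

/-- The absolute elementary unitary group `EU(2n, A, Λ)`. -/
def EUmax (D : FormRingData A) (n : ℕ) : Subgroup (GLn A n) :=
  D.FU n ⊤ D.Lambda

/-- The relative elementary subgroup `EU(2n, I, Γ)`: the normal closure of
`FU(2n, I, Γ)` in `EU(2n, A, Λ)`. -/
def EU (D : FormRingData A) (n : ℕ) (I Γ : AddSubgroup A) : Subgroup (GLn A n) :=
  Subgroup.closure {x | ∃ g ∈ D.EUmax n, ∃ t ∈ D.transvGen n I Γ, x = g * t * g⁻¹}

/-- The additive subgroup generated by products `st`, `s ∈ S`, `t ∈ T`. -/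
def mulSub (S T : AddSubgroup A) : AddSubgroup A :=
  AddSubgroup.closure {x | ∃ a ∈ S, ∃ b ∈ T, x = a * b}

/-- The symmetrised product `ST + TS` of two (additive subgroups underlying)
two-sided ideals. -/
def symI (S T : AddSubgroup A) : AddSubgroup A :=
  mulSub S T ⊔ mulSub T S

/-- The minimal relative form parameter `Γ_min(K)` of level `K`. -/
def gammaMin (D : FormRingData A) (K : AddSubgroup A) : AddSubgroup A :=
  AddSubgroup.closure
    ({x | ∃ a ∈ K, x = a - D.lam * D.bar a} ∪
      {x | ∃ a ∈ K, ∃ c ∈ D.Lambda, x = a * c * D.bar a})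

/-- The relative form parameter `ˢΓ = ⟨ b γ b̄ ∣ b ∈ S, γ ∈ Γ ⟩`. -/
def conjPar (D : FormRingData A) (S Γ : AddSubgroup A) : AddSubgroup A :=
  AddSubgroup.closure {x | ∃ b ∈ S, ∃ g ∈ Γ, x = b * g * D.bar b}

/-- The relative form parameter of the symmetrised product
`(I,Γ)∘(J,Δ) = (IJ+JI, Γ_min(IJ+JI) + ᴶΓ + ᴵΔ)`. -/
def symG (D : FormRingData A) (I Γ J Δ : AddSubgroup A) : AddSubgroup A :=
  D.gammaMin (symI I J) ⊔ D.conjPar J Γ ⊔ D.conjPar I Δ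

/-- The elementary subgroup `EU(2n, (I,Γ)∘(J,Δ))` of the symmetrised product. -/
def EUsym (D : FormRingData A) (n : ℕ) (I Γ J Δ : AddSubgroup A) : Subgroup (GLn A n) :=
  D.EU n (symI I J) (D.symG I Γ J Δ)

/-- Position-dependent membership `a ∈ (I,Γ)` at position `(i,j)`:
`a ∈ I` for a short root position, `a ∈ λ^{−(ε(i)+1)/2}Γ` for a long one. -/
def pmem (D : FormRingData A) (I Γ : AddSubgroup A) {n : ℕ} (i j : Idx n) (a : A) : Prop :=
  if j = Idx.neg i then ∃ g ∈ Γ, a = D.lpow (-(Idx.eps i + 1) / 2) * g else a ∈ I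

end FormRingData

/-- A form ideal `(I,Γ)` of the form ring `(A,Λ)`. -/
structure FormIdeal {A : Type*} [Ring A] (D : FormRingData A) where
  I : AddSubgroup A
  Gamma : AddSubgroup A
  mul_mem_left : ∀ (c : A), ∀ x ∈ I, c * x ∈ I
  mul_mem_right : ∀ (c : A), ∀ x ∈ I, x * c ∈ I
  bar_mem : ∀ x ∈ I, D.bar x ∈ I
  gammaMin_le : D.gammaMin I ≤ Gamma
  gamma_le_I : Gamma ≤ I
  gamma_le_Lambda : Gamma ≤ D.Lambda
  gamma_conj : ∀ (c : A), ∀ x ∈ Gamma, c * x * D.bar c ∈ Gamma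

set_option linter.unusedSimpArgs false
set_option linter.unusedVariables false

namespace FormRingData

variable {A : Type*} [Ring A] {n : ℕ}

attribute [local simp] Idx.neg_neg

theorem bar_one (D : FormRingData A) : D.bar 1 = 1 := by
  have h := D.bar_mul 1 (D.bar 1)
  rw [one_mul, D.bar_bar] at h
  simpa using h.symm

theorem blam_comm (D : FormRingData A) (a : A) : D.bar D.lam * a = a * D.bar D.lam := by
  have h := congrArg D.bar (D.lam_comm (D.bar a))
  rw [D.bar_mul, D.bar_mul, D.bar_bar] at h
  exact h.symm

theorem bar_lam (D : FormRingData A) : D.bar D.lam * D.lam = 1 := by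
  rw [D.blam_comm]; exact D.lam_bar

theorem lam_bar' (D : FormRingData A) (x : A) : D.lam * (D.bar D.lam * x) = x := by
  rw [← mul_assoc, D.lam_bar, one_mul]

theorem bar_lam' (D : FormRingData A) (x : A) : D.bar D.lam * (D.lam * x) = x := by
  rw [← mul_assoc, D.bar_lam, one_mul]

/-- twisted conjugation -/
def st (D : FormRingData A) (i j : Idx n) (c : A) : A :=
  D.lpow ((Idx.eps j - Idx.eps i) / 2) * D.bar c

def lp (D : FormRingData A) (i : Idx n) : A := D.lpow (-(Idx.eps i + 1) / 2)

theorem lpow_zero (D : FormRingData A) : D.lpow 0 = 1 := by simp [lpow]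
theorem lpow_one (D : FormRingData A) : D.lpow 1 = D.lam := by simp [lpow]
theorem lpow_neg_one (D : FormRingData A) : D.lpow (-1) = D.bar D.lam := by simp [lpow]

theorem st_same (D : FormRingData A) (i j : Idx n) (h : i.2 = j.2) (c : A) :
    D.st i j c = D.bar c := by
  simp [st, Idx.eps, h, lpow_zero]

theorem st_tf (D : FormRingData A) (i j : Idx n) (h : i.2 = true) (h' : j.2 = false) (c : A) :
    D.st i j c = D.bar D.lam * D.bar c := by
  simp [st, Idx.eps, h, h', ← lpow_neg_one]

theorem st_ft (D : FormRingData A) (i j : Idx n) (h : i.2 = false) (h' : j.2 = true) (c : A) :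
    D.st i j c = D.lam * D.bar c := by
  simp [st, Idx.eps, h, h', ← lpow_one]

theorem lp_t (D : FormRingData A) (i : Idx n) (h : i.2 = true) : D.lp i = D.bar D.lam := by
  simp [lp, Idx.eps, h, ← lpow_neg_one]

theorem lp_f (D : FormRingData A) (i : Idx n) (h : i.2 = false) : D.lp i = 1 := by
  simp [lp, Idx.eps, h, lpow_zero]

theorem st_neg (D : FormRingData A) (i j : Idx n) (c : A) : D.st i j (-c) = -D.st i j c := by
  simp [st]

theorem lp_comm (D : FormRingData A) (i : Idx n) (c : A) : D.lp i * c = c * D.lp i := by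
  cases hi : i.2
  · simp [lp_f _ _ hi]
  · simp [lp_t _ _ hi, blam_comm]

theorem st_st (D : FormRingData A) (i j : Idx n) (c : A) :
    D.st (Idx.neg j) (Idx.neg i) (D.st i j c) = c := by
  cases hi : i.2 <;> cases hj : j.2
  · rw [st_same _ _ _ (by simp [Idx.neg, hi, hj]), st_same _ _ _ (by simp [hi, hj]), D.bar_bar]
  · rw [st_ft D i j hi hj, st_ft _ _ _ (by simp [Idx.neg, hj]) (by simp [Idx.neg, hi]),
      D.bar_mul, D.bar_bar, ← D.blam_comm, lam_bar']
  · rw [st_tf D i j hi hj, st_tf _ _ _ (by simp [Idx.neg, hj]) (by simp [Idx.neg, hi]),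
      D.bar_mul, D.bar_bar, D.bar_bar, ← D.lam_comm, bar_lam']
  · rw [st_same _ _ _ (by simp [Idx.neg, hi, hj]), st_same _ _ _ (by simp [hi, hj]), D.bar_bar]

theorem st_mul (D : FormRingData A) (i j k : Idx n) (a b : A) :
    D.st i k (a * b) = D.st j k b * D.st i j a := by
  have c1 : ∀ x y : A, x * (D.lam * y) = D.lam * (x * y) := fun x y => by
    rw [← mul_assoc, ← D.lam_comm, mul_assoc]
  have c2 : ∀ x y : A, x * (D.bar D.lam * y) = D.bar D.lam * (x * y) := fun x y => by
    rw [← mul_assoc, ← D.blam_comm, mul_assoc]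
  cases hi : i.2 <;> cases hj : j.2 <;> cases hk : k.2 <;>
  simp [st, Idx.eps, hi, hj, hk, lpow_zero, lpow_one, lpow_neg_one, D.bar_mul, mul_assoc, c1 (D.bar b), c2 (D.bar b),
      lam_bar', bar_lam']

/-- level at a long root position -/
def Lv (D : FormRingData A) (Γ : AddSubgroup A) (i : Idx n) (z : A) : Prop :=
  ∃ g ∈ Γ, z = D.lp i * g

theorem Lv.neg {D : FormRingData A} {Γ : AddSubgroup A} {i : Idx n} {z : A} (h : D.Lv Γ i z) :
    D.Lv Γ i (-z) := by
  obtain ⟨g, hg, rfl⟩ := h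
  exact ⟨-g, Γ.neg_mem hg, by simp⟩

theorem Lv.mono {D : FormRingData A} {Γ Γ' : AddSubgroup A} {i : Idx n} {z : A} (h : D.Lv Γ i z)
    (hl : Γ ≤ Γ') : D.Lv Γ' i z := by
  obtain ⟨g, hg, rfl⟩ := h
  exact ⟨g, hl hg, rfl⟩

theorem Lv.congr {D : FormRingData A} {Γ : AddSubgroup A} {i j : Idx n} {z : A} (h : D.Lv Γ i z)
    (hl : i.2 = j.2) : D.Lv Γ j z := by
  obtain ⟨g, hg, rfl⟩ := h
  exact ⟨g, hg, by simp [lp, Idx.eps, hl]⟩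

theorem Lv.st_eq {D : FormRingData A} {i : Idx n} {z : A} (h : D.Lv D.Lambda i z) :
    D.st i (Idx.neg i) z = -z := by
  obtain ⟨g, hg, rfl⟩ := h
  have h1 := D.lambdaMax_mem g hg
  cases hi : i.2
  · rw [st_ft _ _ _ hi (by simp [Idx.neg, hi]), lp_f _ _ hi, one_mul]
    exact (neg_eq_iff_eq_neg.2 h1).symm
  · rw [st_tf _ _ _ hi (by simp [Idx.neg, hi]), lp_t _ _ hi, D.bar_mul, D.bar_bar,
      ← D.lam_comm, ← mul_neg]
    congr 1
    exact (neg_eq_iff_eq_neg.2 h1).symm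

theorem lp_conj (D : FormRingData A) (i j : Idx n) (a g : A) :
    a * (D.lp j * g) * D.st i j a = D.lp i * (a * g * D.bar a) := by
  have c1 : ∀ x y : A, x * (D.lam * y) = D.lam * (x * y) := fun x y => by
    rw [← mul_assoc, ← D.lam_comm, mul_assoc]
  have c2 : ∀ x y : A, x * (D.bar D.lam * y) = D.bar D.lam * (x * y) := fun x y => by
    rw [← mul_assoc, ← D.blam_comm, mul_assoc]
  cases hi : i.2 <;> cases hj : j.2 <;>
  simp [st, lp, Idx.eps, hi, hj, lpow_zero, lpow_one, lpow_neg_one, mul_assoc, c1 a, c1 g, c2 a,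
      c2 g, lam_bar', bar_lam']

theorem Lv.conj {D : FormRingData A} {Γ Γ' : AddSubgroup A} {j : Idx n} {z : A} (i : Idx n)
    (h : D.Lv Γ j z) (a : A) (ha : ∀ g ∈ Γ, a * g * D.bar a ∈ Γ') :
    D.Lv Γ' i (a * z * D.st i j a) := by
  obtain ⟨g, hg, rfl⟩ := h
  exact ⟨_, ha g hg, D.lp_conj i j a g⟩

theorem Lv.conj' {D : FormRingData A} {Γ Γ' : AddSubgroup A} {j : Idx n} {z : A} (k : Idx n)
    (h : D.Lv Γ j z) (d : A)
    (ha : ∀ g ∈ Γ, D.st (Idx.neg j) k d * g * D.bar (D.st (Idx.neg j) k d) ∈ Γ') :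
    D.Lv Γ' (Idx.neg k) (D.st (Idx.neg j) k d * z * d) := by
  have := h.conj (Idx.neg k) _ ha
  have h2 := D.st_st (Idx.neg j) k d
  rw [Idx.neg_neg] at h2
  rwa [h2] at this

theorem lv_min {D : FormRingData A} (FI : FormIdeal D) (i : Idx n) (c : A) (hc : c ∈ FI.I) :
    D.Lv FI.Gamma i (c - D.st i (Idx.neg i) c) := by
  cases hi : i.2
  · refine ⟨_, FI.gammaMin_le (AddSubgroup.subset_closure (Or.inl ⟨c, hc, rfl⟩)), ?_⟩
    rw [st_ft _ _ _ hi (by simp [Idx.neg, hi]), lp_f _ _ hi, one_mul]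
  · refine ⟨_, FI.gammaMin_le (AddSubgroup.subset_closure (Or.inl ⟨D.lam * c,
      FI.mul_mem_left _ _ hc, rfl⟩)), ?_⟩
    rw [st_tf _ _ _ hi (by simp [Idx.neg, hi]), lp_t _ _ hi, D.bar_mul, mul_sub, bar_lam',
      bar_lam', D.blam_comm]

theorem smul_single' (i j k l : Idx n) (a b : A) :
    single i j a * single k l b = if j = k then single i l (a * b) else 0 := by
  split_ifs with h
  · subst h; simp
  · exact Matrix.single_mul_single_of_ne _ _ _ _ h _

theorem TS_val (D : FormRingData A) {i j : Idx n} (h : i ≠ j) (c : A) :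
    (D.TS i j c : Matrix (Idx n) (Idx n) A) =
      1 + (single i j c - single (Idx.neg j) (Idx.neg i) (D.st i j c)) := by
  simp [TS, h, Xmat, st]

theorem TL_val (D : FormRingData A) (i : Idx n) (c : A) :
    (D.TL i c : Matrix (Idx n) (Idx n) A) = 1 + single i (Idx.neg i) c := rfl

theorem TS_inv (D : FormRingData A) {i j : Idx n} (c : A) :
    (D.TS i j c)⁻¹ = D.TS i j (-c) := by
  by_cases h : i = j
  · simp [TS, h]
  · apply Units.ext
    simp only [TS, h, dite_false]
    rfl

theorem TL_inv (D : FormRingData A) (i : Idx n) (c : A) : (D.TL i c)⁻¹ = D.TL i (-c) :=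
  Units.ext rfl

theorem TL_add (D : FormRingData A) (i : Idx n) (c d : A) :
    D.TL i (c + d) = D.TL i c * D.TL i d := by
  apply Units.ext
  simp only [Units.val_mul, TL_val, mul_add, add_mul, mul_one, one_mul, smul_single',
    Idx.neg_ne, if_false, add_zero, Matrix.single_add]
  abel

theorem TS_symm (D : FormRingData A) {i j : Idx n} (h : i ≠ j) (c : A) :
    D.TS i j c = D.TS (Idx.neg j) (Idx.neg i) (-D.st i j c) := by
  have h' : Idx.neg j ≠ Idx.neg i := fun e => h (Idx.neg_injective e).symm
  apply Units.ext
  rw [TS_val _ h, TS_val _ h', st_neg, st_st]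
  simp [stdBasisMatrix_neg']
  abel

theorem neg_eq_iff' {i j : Idx n} : Idx.neg i = j ↔ i = Idx.neg j :=
  ⟨fun h => by rw [← h, Idx.neg_neg], fun h => by rw [h, Idx.neg_neg]⟩

theorem neg_inj' {i j : Idx n} : Idx.neg i = Idx.neg j ↔ i = j :=
  Idx.neg_injective.eq_iff

theorem comm_SS (D : FormRingData A) {i j k l : Idx n} (a b : A) (hij : i ≠ j) (hkl : k ≠ l)
    (h1 : j ≠ k) (h2 : l ≠ i) (h3 : j ≠ Idx.neg l) (h4 : i ≠ Idx.neg k) :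
    Commute (D.TS i j a) (D.TS k l b) := by
  have h1' := h1.symm
  have h2' := h2.symm
  have h3' : l ≠ Idx.neg j := fun e => h3 (by rw [e, Idx.neg_neg])
  have h4' : k ≠ Idx.neg i := fun e => h4 (by rw [e, Idx.neg_neg])
  apply Units.ext
  simp only [Units.val_mul, TS_val _ hij, TS_val _ hkl, mul_add, add_mul, mul_sub, sub_mul, mul_one,
    one_mul, smul_single', neg_inj', neg_eq_iff', Idx.neg_neg, h1, h2, h3, h4, h1', h2', h3', h4',
    if_false, sub_zero, add_zero]
  abel

theorem comm_SL (D : FormRingData A) {i j k : Idx n} (a b : A) (hij : i ≠ j)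
    (h1 : j ≠ k) (h4 : i ≠ Idx.neg k) :
    Commute (D.TS i j a) (D.TL k b) := by
  have h1' := h1.symm
  have h4' : k ≠ Idx.neg i := fun e => h4 (by rw [e, Idx.neg_neg])
  apply Units.ext
  simp only [Units.val_mul, TS_val _ hij, TL_val, mul_add, add_mul, mul_sub, sub_mul, mul_one,
    one_mul, smul_single', neg_inj', neg_eq_iff', Idx.neg_neg, h1, h4, h1', h4', h4'.symm,
    if_false, sub_zero, add_zero]
  abel

theorem comm_LL (D : FormRingData A) {i k : Idx n} (a b : A) (h4 : i ≠ Idx.neg k) :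
    Commute (D.TL i a) (D.TL k b) := by
  have h4' : k ≠ Idx.neg i := fun e => h4 (by rw [e, Idx.neg_neg])
  apply Units.ext
  simp only [Units.val_mul, TL_val, mul_add, add_mul, mul_one,
    one_mul, smul_single', neg_eq_iff', h4, h4',
    if_false, add_zero]
  abel

theorem S3 (D : FormRingData A) {i j k : Idx n} (a b : A) (hij : i ≠ j) (hij' : i ≠ Idx.neg j)
    (hjk : j ≠ k) (hjk' : j ≠ Idx.neg k) (hik : i ≠ k) (hik' : i ≠ Idx.neg k) :
    D.TS i j a * D.TS j k b * (D.TS i j a)⁻¹ = D.TS i k (a * b) * D.TS j k b := by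
  rw [mul_inv_eq_iff_eq_mul]
  have e1 : j ≠ Idx.neg i := fun e => hij' (by rw [e, Idx.neg_neg])
  have e2 : k ≠ Idx.neg j := fun e => hjk' (by rw [e, Idx.neg_neg])
  have e3 : k ≠ Idx.neg i := fun e => hik' (by rw [e, Idx.neg_neg])
  have n1 := fun x : Idx n => (Idx.neg_ne x).symm
  apply Units.ext
  simp only [Units.val_mul, TS_val _ hij, TS_val _ hjk, TS_val _ hik, mul_add, add_mul, mul_sub,
    sub_mul, mul_one,
    one_mul, smul_single', neg_inj', neg_eq_iff', Idx.neg_neg, hij, hij', hjk, hjk', hik, hik',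
    hij.symm, hjk.symm, hik.symm, e1, e2, e3, n1, D.st_mul i j k,
    if_false, if_true, sub_zero, add_zero]
  abel

theorem S4 (D : FormRingData A) {i j : Idx n} (a b : A) (hij : i ≠ j) (hij' : i ≠ Idx.neg j) :
    D.TS i j a * D.TS j (Idx.neg i) b * (D.TS i j a)⁻¹ =
      D.TL i (a * b - D.st i (Idx.neg i) (a * b)) * D.TS j (Idx.neg i) b := by
  rw [mul_inv_eq_iff_eq_mul]
  have e1 : j ≠ Idx.neg i := fun e => hij' (by rw [e, Idx.neg_neg])
  have n1 := fun x : Idx n => (Idx.neg_ne x).symm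
  apply Units.ext
  simp only [Units.val_mul, TS_val _ hij, TS_val _ e1, TL_val, mul_add, add_mul, mul_sub,
    sub_mul, mul_one, sub_eq_add_neg, Matrix.single_add, stdBasisMatrix_neg', mul_neg, neg_mul,
    one_mul, smul_single', neg_inj', neg_eq_iff', Idx.neg_neg, hij, hij',
    hij.symm, e1, n1, D.st_mul i j (Idx.neg i),
    if_false, if_true, sub_zero, add_zero, neg_zero, neg_neg, mul_zero, zero_mul]
  abel

theorem S5a (D : FormRingData A) {i j : Idx n} (a b : A) (hij : i ≠ j) (hij' : i ≠ Idx.neg j)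
    (hb : D.st j (Idx.neg j) b = -b) :
    D.TS i j a * D.TL j b * (D.TS i j a)⁻¹ =
      D.TL j b * D.TS i (Idx.neg j) (a * b) * D.TL i (a * b * D.st i j a) := by
  rw [mul_inv_eq_iff_eq_mul]
  have e1 : j ≠ Idx.neg i := fun e => hij' (by rw [e, Idx.neg_neg])
  have n1 := fun x : Idx n => (Idx.neg_ne x).symm
  apply Units.ext
  simp only [Units.val_mul, TS_val _ hij, TS_val _ hij', TL_val, mul_add, add_mul, mul_sub,
    sub_mul, mul_one, sub_eq_add_neg, Matrix.single_add, stdBasisMatrix_neg', mul_neg, neg_mul,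
    one_mul, smul_single', neg_inj', neg_eq_iff', Idx.neg_neg, hij, hij',
    hij.symm, e1, n1, D.st_mul i j (Idx.neg j), hb, mul_assoc,
    if_false, if_true, sub_zero, add_zero, neg_zero, neg_neg, mul_zero, zero_mul]
  abel

theorem S5c (D : FormRingData A) {h k : Idx n} (b d : A) (hij : h ≠ k) (hij' : h ≠ Idx.neg k)
    (hb : D.st h (Idx.neg h) b = -b) :
    D.TL h b * D.TS (Idx.neg h) k d * (D.TL h b)⁻¹ =
      D.TS h k (b * d) * D.TS (Idx.neg h) k d * D.TL (Idx.neg k) (-(D.st (Idx.neg h) k d * b * d))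
      := by
  rw [mul_inv_eq_iff_eq_mul]
  have e1 : k ≠ Idx.neg h := fun e => hij' (by rw [e, Idx.neg_neg])
  have n1 := fun x : Idx n => (Idx.neg_ne x).symm
  apply Units.ext
  simp only [Units.val_mul, TS_val _ hij, TS_val _ e1.symm, TL_val, mul_add, add_mul, mul_sub,
    sub_mul, mul_one, sub_eq_add_neg, Matrix.single_add, stdBasisMatrix_neg', mul_neg, neg_mul,
    one_mul, smul_single', neg_inj', neg_eq_iff', Idx.neg_neg, hij, hij',
    hij.symm, e1, n1, D.st_mul h (Idx.neg h) k, hb, mul_assoc,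
    if_false, if_true, sub_zero, add_zero, neg_zero, neg_neg, mul_zero, zero_mul]
  abel

end FormRingData

namespace FormRingData

variable {A : Type*} [Ring A] {n : ℕ}

theorem nf {i j : Idx n} (h : i.1 ≠ j.1) : i ≠ j := fun e => h (congrArg Prod.fst e)

theorem cj {G : Type*} [Group G] {x z : G} (h : Commute x z) : x * z * x⁻¹ = z := by
  rw [h.eq]; group

theorem cmul {G : Type*} [Group G] (x a b : G) :
    x * (a * b) * x⁻¹ = (x * a * x⁻¹) * (x * b * x⁻¹) := by group

theorem cj3 {G : Type*} [Group G] (a b c z : G) :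
    (a * b * c) * z * (a * b * c)⁻¹ = a * (b * (c * z * c⁻¹) * b⁻¹) * a⁻¹ := by group

theorem comm_conj_left {G : Type*} [Group G] (F K : Subgroup G) {f x : G} (hf : f ∈ F)
    (hx : x ∈ ⁅F, K⁆) : f * x * f⁻¹ ∈ ⁅F, K⁆ := by
  rw [Subgroup.commutator_def] at hx
  induction hx using Subgroup.closure_induction with
  | mem x hx =>
    obtain ⟨a, ha, b, hb, rfl⟩ := hx
    have : f * ⁅a, b⁆ * f⁻¹ = ⁅f * a, b⁆ * ⁅f, b⁆⁻¹ := by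
      simp only [commutatorElement_def]; group
    rw [this]
    exact mul_mem (Subgroup.commutator_mem_commutator (mul_mem hf ha) hb)
      (inv_mem (Subgroup.commutator_mem_commutator hf hb))
  | one => simp
  | mul x y _ _ hx hy => rw [cmul]; exact mul_mem hx hy
  | inv x _ hx =>
    have : f * x⁻¹ * f⁻¹ = (f * x * f⁻¹)⁻¹ := by group
    rw [this]; exact inv_mem hx

theorem comm_conj_right {G : Type*} [Group G] (F K : Subgroup G) {f x : G} (hf : f ∈ K)
    (hx : x ∈ ⁅F, K⁆) : f * x * f⁻¹ ∈ ⁅F, K⁆ := by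
  rw [Subgroup.commutator_comm] at hx ⊢
  exact comm_conj_left K F hf hx

theorem TS_mem (D : FormRingData A) {I Γ : AddSubgroup A} {i j : Idx n} (h : i.1 ≠ j.1) {c : A}
    (hc : c ∈ I) : D.TS i j c ∈ D.FU n I Γ :=
  Subgroup.subset_closure (Or.inl ⟨i, j, nf h, nf h, c, hc, rfl⟩)

theorem TL_mem (D : FormRingData A) {I Γ : AddSubgroup A} {i : Idx n} {c : A}
    (hc : D.Lv Γ i c) : D.TL i c ∈ D.FU n I Γ := by
  obtain ⟨g, hg, rfl⟩ := hc
  exact Subgroup.subset_closure (Or.inr ⟨i, g, hg, rfl⟩)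

theorem st_mem {D : FormRingData A} (FI : FormIdeal D) (i j : Idx n) {c : A} (hc : c ∈ FI.I) :
    D.st i j c ∈ FI.I := FI.mul_mem_left _ _ (FI.bar_mem _ hc)

theorem min_mem {D : FormRingData A} (FI : FormIdeal D) {c g : A} (hc : c ∈ FI.I)
    (hg : g ∈ D.Lambda) : c * g * D.bar c ∈ FI.Gamma :=
  FI.gammaMin_le (AddSubgroup.subset_closure (Or.inr ⟨c, hc, g, hg, rfl⟩))

theorem Lv.memI {D : FormRingData A} {FI : FormIdeal D} {i : Idx n} {c : A}
    (hc : D.Lv FI.Gamma i c) : c ∈ FI.I := by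
  obtain ⟨g, hg, rfl⟩ := hc
  exact FI.mul_mem_left _ _ (FI.gamma_le_I hg)

/-- The element `y`. -/
def yy (D : FormRingData A) (i h : Idx n) (ρ σ ρ' : A) : GLn A n :=
  D.TS h (Idx.neg i) ρ * D.TS h i σ * D.TL h ρ'

theorem yA (D : FormRingData A) {i h : Idx n} (hih : h.1 ≠ i.1) (ρ σ ρ' c : A)
    (hc : D.Lv D.Lambda (Idx.neg i) c) :
    D.yy i h ρ σ ρ' * D.TL (Idx.neg i) c * (D.yy i h ρ σ ρ')⁻¹ =
      D.TL (Idx.neg i) c * D.TS h i (ρ * c) * D.TL h (ρ * c * D.st h (Idx.neg i) ρ) := by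
  have h5 := D.S5a ρ c (i := h) (j := Idx.neg i) (nf hih) (nf hih) hc.st_eq
  rw [Idx.neg_neg] at h5
  rw [yy, cj3, cj (D.comm_LL (i := h) (k := Idx.neg i) _ _ (nf hih)),
    cj (D.comm_SL (i := h) (j := i) (k := Idx.neg i) _ _ (nf hih) (Idx.neg_ne i).symm (nf hih)), h5]

theorem yA' (D : FormRingData A) {i h : Idx n} (hih : h.1 ≠ i.1) (ρ σ ρ' c : A)
    (hc : D.Lv D.Lambda (Idx.neg i) c) :
    (D.yy i h ρ σ ρ')⁻¹ * D.TL (Idx.neg i) c * (D.yy i h ρ σ ρ') =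
      D.TL (Idx.neg i) c * D.TS h i (-ρ * c) *
        D.TL h (-ρ * c * D.st h (Idx.neg i) (-ρ)) := by
  have h5 := D.S5a (-ρ) c (i := h) (j := Idx.neg i) (nf hih) (nf hih) hc.st_eq
  rw [Idx.neg_neg, ← TS_inv, inv_inv] at h5
  have e : (D.yy i h ρ σ ρ')⁻¹ * D.TL (Idx.neg i) c * (D.yy i h ρ σ ρ') =
    (D.TL h ρ')⁻¹ * ((D.TS h i σ)⁻¹ * ((D.TS h (Idx.neg i) ρ)⁻¹ * D.TL (Idx.neg i) c *
      D.TS h (Idx.neg i) ρ) * (D.TS h i σ)⁻¹⁻¹) * (D.TL h ρ')⁻¹⁻¹ := by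
    rw [yy]; group
  have c1 : Commute (D.TS h i σ)⁻¹ (D.TL (Idx.neg i) c * D.TS h i (-ρ * c) *
        D.TL h (-ρ * c * D.st h (Idx.neg i) (-ρ))) := by
    apply Commute.inv_left
    refine Commute.mul_right (Commute.mul_right ?_ ?_) ?_
    · exact D.comm_SL (i := h) (j := i) (k := Idx.neg i) _ _ (nf hih) (Idx.neg_ne i).symm (nf hih)
    · exact D.comm_SS (i := h) (j := i) (k := h) (l := i) _ _ (nf hih) (nf hih) (nf hih.symm)
        (nf hih.symm) (Idx.neg_ne i).symm (Idx.neg_ne h).symm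
    · exact D.comm_SL (i := h) (j := i) (k := h) _ _ (nf hih) (nf hih.symm) (Idx.neg_ne h).symm
  rw [e, h5, cj c1, cj]
  apply Commute.inv_left
  refine Commute.mul_right (Commute.mul_right ?_ ?_) ?_
  · exact D.comm_LL (i := h) (k := Idx.neg i) _ _ (nf hih)
  · exact (D.comm_SL (i := h) (j := i) (k := h) _ _ (nf hih) (nf hih.symm)
      (Idx.neg_ne h).symm).symm
  · exact D.comm_LL (i := h) (k := h) _ _ (Idx.neg_ne h).symm

theorem yE (D : FormRingData A) {i h k : Idx n} (hih : h.1 ≠ i.1) (hik : i.1 ≠ k.1)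
    (hhk : h.1 ≠ k.1) (ρ σ ρ' d : A) (hρ : D.Lv D.Lambda h ρ') (S : Subgroup (GLn A n))
    (hS : ∀ (α : Idx n) (e : A), α.1 ≠ k.1 → D.TS α k (e * d) ∈ S)
    (hL : ∀ β, D.Lv D.Lambda h β → D.TL (Idx.neg k) (D.st (Idx.neg h) k d * β * d) ∈ S) :
    D.yy i h ρ σ ρ' * D.TS (Idx.neg h) k d * (D.yy i h ρ σ ρ')⁻¹ ∈ S := by
  have hS1 : ∀ α : Idx n, α.1 ≠ k.1 → D.TS α k d ∈ S := fun α h => by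
    simpa using hS α 1 h
  have e1 := D.S3 (i := Idx.neg i) (j := Idx.neg h) (k := k) (-D.st h i σ) d (nf hih.symm)
    (nf hih.symm) (nf hhk) (nf hhk) (nf hik) (nf hik)
  rw [← TS_symm D (i := h) (j := i) (nf hih) σ] at e1
  have e2 := D.S3 (i := h) (j := Idx.neg i) (k := k) ρ (-D.st h i σ * d) (nf hih)
    (nf hih) (nf hik) (nf hik) (nf hhk) (nf hhk)
  have e3 := D.S3 (i := i) (j := Idx.neg h) (k := k) (-D.st h (Idx.neg i) ρ) d (nf hih.symm)
    (nf hih.symm) (nf hhk) (nf hhk) (nf hik) (nf hik)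
  have e4 := TS_symm D (i := h) (j := Idx.neg i) (nf hih) ρ
  rw [Idx.neg_neg] at e4
  rw [← e4] at e3
  rw [yy, cj3, D.S5c (h := h) (k := k) _ _ (nf hhk) (nf hhk) hρ.st_eq]
  simp only [cmul (D.TS h i σ)]
  rw [e1, cj (D.comm_SS (i := h) (j := i) (k := h) (l := k) _ _ (nf hih) (nf hhk) (nf hih.symm) (nf hhk.symm) (nf hik)
      (Idx.neg_ne h).symm),
    cj (D.comm_SL (i := h) (j := i) (k := Idx.neg k) _ _ (nf hih) (nf hik) (nf hhk))]
  simp only [cmul (D.TS h (Idx.neg i) ρ)]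
  rw [e2, e3, cj (D.comm_SS (i := h) (j := Idx.neg i) (k := h) (l := k) _ _ (nf hih) (nf hhk) (nf hih.symm) (nf hhk.symm) (nf hik)
      (Idx.neg_ne h).symm),
    cj (D.comm_SL (i := h) (j := Idx.neg i) (k := Idx.neg k) _ _ (nf hih) (nf hik) (nf hhk))]
  refine mul_mem (mul_mem (hS _ _ hhk) (mul_mem (mul_mem ?_ (hS _ _ hik))
    (mul_mem (hS _ _ hik) (hS1 _ hhk)))) ?_
  · rw [← mul_assoc]; exact hS _ _ hhk
  · rw [← TL_inv]; exact inv_mem (hL _ hρ)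

theorem yF (D : FormRingData A) {i h k : Idx n} (hih : h.1 ≠ i.1) (hik : i.1 ≠ k.1)
    (hhk : h.1 ≠ k.1) (ρ σ ρ' x : A) {FI : FormIdeal D} (hx : x ∈ FI.I) :
    D.yy i h ρ σ ρ' * D.TS k i x * (D.yy i h ρ σ ρ')⁻¹ ∈ D.FU n FI.I FI.Gamma := by
  have e1 := D.S3 (i := h) (j := Idx.neg i) (k := Idx.neg k) ρ (-D.st k i x) (nf hih)
    (nf hih) (nf hik) (nf hik) (nf hhk) (nf hhk)
  rw [← TS_symm D (i := k) (j := i) (nf hik.symm) x] at e1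
  rw [yy, cj3, cj (D.comm_SL (i := k) (j := i) (k := h) _ _ (nf hik.symm) (nf hih.symm) (nf hhk.symm)).symm,
    cj (D.comm_SS (i := h) (j := i) (k := k) (l := i) _ _ (nf hih) (nf hik.symm) (nf hik) (nf hih.symm) (Idx.neg_ne i).symm
      (nf hhk)), e1]
  exact mul_mem (TS_mem D (i := h) (j := Idx.neg k) hhk (FI.mul_mem_left _ _ (FI.I.neg_mem (st_mem FI _ _ hx))))
    (TS_mem D hik.symm hx)

theorem yG (D : FormRingData A) {i h : Idx n} (hih : h.1 ≠ i.1)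
    (ρ σ ρ' x : A) {FI : FormIdeal D} (hx : x ∈ FI.I) :
    D.yy i h ρ σ ρ' * D.TS h i x * (D.yy i h ρ σ ρ')⁻¹ ∈ D.FU n FI.I FI.Gamma := by
  have e1 := D.S4 (i := h) (j := Idx.neg i) ρ (-D.st h i x) (nf hih) (nf hih)
  rw [← TS_symm D (i := h) (j := i) (nf hih) x] at e1
  rw [yy, cj3, cj (D.comm_SL (i := h) (j := i) (k := h) _ _ (nf hih) (nf hih.symm) (Idx.neg_ne h).symm).symm,
    cj (D.comm_SS (i := h) (j := i) (k := h) (l := i) _ _ (nf hih) (nf hih) (nf hih.symm) (nf hih.symm) (Idx.neg_ne i).symm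
      (Idx.neg_ne h).symm), e1]
  exact mul_mem (TL_mem D (lv_min FI _ _ (FI.mul_mem_left _ _ (FI.I.neg_mem (st_mem FI _ _ hx)))))
    (TS_mem D hih hx)

theorem yC_S (D : FormRingData A) {i h k : Idx n} (hih : h.1 ≠ i.1) (hik : i.1 ≠ k.1)
    (hhk : h.1 ≠ k.1) (ρ σ ρ' x : A) :
    Commute (D.yy i h ρ σ ρ') (D.TS h k x) := by
  refine ((D.comm_SS _ _ ?_ ?_ ?_ ?_ ?_ ?_).mul_left (D.comm_SS _ _ ?_ ?_ ?_ ?_ ?_ ?_)).mul_left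
    (D.comm_SL _ _ ?_ ?_ ?_).symm
  all_goals first
    | exact nf hih
    | exact nf hih.symm
    | exact nf hik
    | exact nf hik.symm
    | exact nf hhk
    | exact nf hhk.symm
    | exact (Idx.neg_ne h).symm

theorem yC_L (D : FormRingData A) {i h k : Idx n} (hih : h.1 ≠ i.1) (hik : i.1 ≠ k.1)
    (hhk : h.1 ≠ k.1) (ρ σ ρ' x : A) :
    Commute (D.yy i h ρ σ ρ') (D.TL k x) := by
  refine ((D.comm_SL _ _ ?_ ?_ ?_).mul_left (D.comm_SL _ _ ?_ ?_ ?_)).mul_left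
    (D.comm_LL _ _ ?_)
  all_goals first
    | exact nf hih
    | exact nf hih.symm
    | exact nf hik
    | exact nf hik.symm
    | exact nf hhk
    | exact nf hhk.symm
    | exact (Idx.neg_ne h).symm

theorem yC_h (D : FormRingData A) {i h : Idx n} (hih : h.1 ≠ i.1) (ρ σ ρ' x : A) :
    Commute (D.yy i h ρ σ ρ') (D.TL h x) := by
  refine ((D.comm_SL _ _ ?_ ?_ ?_).mul_left (D.comm_SL _ _ ?_ ?_ ?_)).mul_left
    (D.comm_LL _ _ ?_)
  all_goals first | exact nf hih | exact nf hih.symm | exact (Idx.neg_ne h).symm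

theorem third (hn : 3 ≤ n) (a b : Fin n) : ∃ c : Fin n, c ≠ a ∧ c ≠ b := by
  have : ({a, b} : Finset (Fin n)).card < (Finset.univ : Finset (Fin n)).card := by
    rw [Finset.card_univ, Fintype.card_fin]
    exact lt_of_le_of_lt Finset.card_le_two (by omega)
  obtain ⟨c, _, hc⟩ := Finset.exists_mem_notMem_of_card_lt_card this
  simp at hc
  exact ⟨c, hc⟩

variable {D : FormRingData A} (FI FJ : FormIdeal D)

theorem H_IJ (hn : 3 ≤ n) {α β : Idx n} (h : α.1 ≠ β.1) {x b : A} (hx : x ∈ FI.I)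
    (hb : b ∈ FJ.I) :
    D.TS α β (x * b) ∈ ⁅D.FU n FI.I FI.Gamma, D.FU n FJ.I FJ.Gamma⁆ := by
  obtain ⟨c, h1, h2⟩ := third hn α.1 β.1
  have e := D.S3 (i := α) (j := (c, true)) (k := β) x b (nf h1.symm) (nf h1.symm) (nf h2) (nf h2)
    (nf h) (nf h)
  have : D.TS α β (x * b) = ⁅D.TS α (c, true) x, D.TS (c, true) β b⁆ := by
    rw [commutatorElement_def, e]; group
  rw [this]
  exact Subgroup.commutator_mem_commutator (TS_mem D h1.symm hx) (TS_mem D h2 hb)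

theorem H_JI (hn : 3 ≤ n) {α β : Idx n} (h : α.1 ≠ β.1) {x b : A} (hx : x ∈ FI.I)
    (hb : b ∈ FJ.I) :
    D.TS α β (b * x) ∈ ⁅D.FU n FI.I FI.Gamma, D.FU n FJ.I FJ.Gamma⁆ := by
  rw [Subgroup.commutator_comm]
  exact H_IJ FJ FI hn h hb hx

theorem H_L (hn : 3 ≤ n) {α : Idx n} {z : A} (hz : D.Lv (D.conjPar FI.I FJ.Gamma) α z) :
    D.TL α z ∈ ⁅D.FU n FI.I FI.Gamma, D.FU n FJ.I FJ.Gamma⁆ := by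
  obtain ⟨g, hg, rfl⟩ := hz
  induction hg using AddSubgroup.closure_induction with
  | mem x hx =>
    obtain ⟨w, hw, g, hg, rfl⟩ := hx
    obtain ⟨c, h1, -⟩ := third hn α.1 α.1
    have hl : D.Lv FJ.Gamma ((c, true) : Idx n) (D.lp ((c, true) : Idx n) * g) := ⟨g, hg, rfl⟩
    have e := D.S5a (i := α) (j := (c, true)) w (D.lp ((c, true) : Idx n) * g) (nf h1.symm)
      (nf h1.symm) (hl.mono FJ.gamma_le_Lambda).st_eq
    rw [lp_conj] at e
    set β : Idx n := (c, true)
    have c1 : Commute (D.TL β (D.lp β * g)) (D.TS α (Idx.neg β) (w * (D.lp β * g))) :=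
      (D.comm_SL _ _ (nf h1.symm) (Idx.neg_ne β) (nf h1.symm)).symm
    have c2 : Commute (D.TL β (D.lp β * g)) (D.TL α (D.lp α * (w * g * D.bar w))) :=
      D.comm_LL _ _ (nf h1)
    have : D.TL α (D.lp α * (w * g * D.bar w)) =
        (D.TS α (Idx.neg β) (w * (D.lp β * g)))⁻¹ * ⁅D.TS α β w, D.TL β (D.lp β * g)⁆ := by
      rw [commutatorElement_def, e, mul_assoc (D.TL β (D.lp β * g)), (c1.mul_right c2).eq]; group
    rw [this]
    exact mul_mem (inv_mem (H_IJ FI FJ hn h1.symm hw hl.memI))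
      (Subgroup.commutator_mem_commutator (TS_mem D h1.symm hw) (TL_mem D hl))
  | zero =>
    have : D.TL α (D.lp α * 0) = 1 := by apply Units.ext; simp [TL_val]
    rw [this]; exact one_mem _
  | add x y _ _ hx hy => rw [mul_add, TL_add]; exact mul_mem hx hy
  | neg x _ hx => rw [mul_neg, ← TL_inv]; exact inv_mem hx

theorem conjPar_conj (c : A) {g : A} (hg : g ∈ D.conjPar FI.I FJ.Gamma) :
    c * g * D.bar c ∈ D.conjPar FI.I FJ.Gamma := by
  induction hg using AddSubgroup.closure_induction with
  | mem x hx =>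
    obtain ⟨w, hw, g, hg, rfl⟩ := hx
    exact AddSubgroup.subset_closure ⟨c * w, FI.mul_mem_left _ _ hw, g, hg, by
      rw [D.bar_mul]; simp only [mul_assoc]⟩
  | zero => simp
  | add x y _ _ hx hy => rw [mul_add, add_mul]; exact add_mem hx hy
  | neg x _ hx => rw [mul_neg, neg_mul]; exact neg_mem hx

theorem conjPar_le : D.conjPar FI.I FJ.Gamma ≤ D.Lambda := by
  refine (AddSubgroup.closure_le _).2 ?_
  rintro _ ⟨w, hw, g, hg, rfl⟩
  exact D.lambda_conj _ _ (FJ.gamma_le_Lambda hg)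

/-- second step -/
theorem key2 (hn : 3 ≤ n) {i h k : Idx n} (hih : h.1 ≠ i.1) (hik : i.1 ≠ k.1)
    (hhk : h.1 ≠ k.1) (hs : h.2 = k.2) (ρ σ ρ' : A) (hρ : D.Lv D.Lambda h ρ') (z b : A)
    (hz : D.Lv FI.Gamma h z) (hb : D.Lv FJ.Gamma (Idx.neg h) b) :
    D.yy i h ρ σ ρ' * ⁅D.TL h z, D.TL (Idx.neg h) b⁆ * (D.yy i h ρ σ ρ')⁻¹ ∈
      ⁅D.FU n FI.I FI.Gamma, D.FU n FJ.I FJ.Gamma⁆ := by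
  have hzk : D.Lv FI.Gamma k z := hz.congr hs
  have hzs := (hzk.mono FI.gamma_le_Lambda).st_eq
  have hbs := (hb.mono FJ.gamma_le_Lambda).st_eq
  have eq1 : D.TS (Idx.neg k) (Idx.neg h) 1 = D.TS h k (-1) := by
    rw [TS_symm D (i := Idx.neg k) (j := Idx.neg h) (nf hhk.symm), Idx.neg_neg, Idx.neg_neg, st_same _ _ _ (by simp [Idx.neg, hs]),
      bar_one]
  have e1 := D.S5a (i := h) (j := k) (-1) z (nf hhk) (nf hhk) hzs
  rw [← eq1, st_neg, st_same _ _ _ hs, bar_one] at e1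
  have e2 := D.S5a (i := Idx.neg k) (j := Idx.neg h) 1 b (nf hhk.symm) (nf hhk.symm) hbs
  rw [st_same _ _ _ (by simp [Idx.neg, hs]), bar_one, Idx.neg_neg] at e2
  simp only [neg_mul, one_mul, mul_one, mul_neg, neg_neg] at e1 e2
  have e3 := D.S5c (h := Idx.neg h) (k := Idx.neg k) b (-z) (nf hhk) (nf hhk) hbs
  simp only [Idx.neg_neg] at e3
  set q := D.TS (Idx.neg k) (Idx.neg h) 1
  set t := D.TL (Idx.neg h) b with ht
  set M := D.TL k z with hM
  set X2 := D.TS h (Idx.neg k) (-z) with hX2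
  set m := D.TL h z with hm
  set X3 := D.TS (Idx.neg k) h b with hX3
  set N := D.TL (Idx.neg k) b with hN
  set U := D.TS (Idx.neg h) (Idx.neg k) (b * -z) with hU
  set L := D.TL k (-(D.st h (Idx.neg k) (-z) * b * -z)) with hL
  set y := D.yy i h ρ σ ρ' with hy
  have cMt : Commute M t := D.comm_LL _ _ (nf hhk.symm)
  have cNt : Commute N t := D.comm_LL _ _ (nf hhk.symm)
  have cXt : Commute X3 t := D.comm_SL _ _ (nf hhk.symm) (Idx.neg_ne h).symm (nf hhk.symm)
  have cXL : Commute X2 L := D.comm_SL _ _ (nf hhk) (Idx.neg_ne k) (nf hhk)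
  have yM : y * M * y⁻¹ = M := cj (D.yC_L hih hik hhk _ _ _ _)
  have yN : y * N * y⁻¹ = N := cj (D.yC_L (k := Idx.neg k) hih hik hhk _ _ _ _)
  have yL : y * L * y⁻¹ = L := cj (D.yC_L hih hik hhk _ _ _ _)
  have yX2 : y * X2 * y⁻¹ = X2 := cj (D.yC_S (k := Idx.neg k) hih hik hhk _ _ _ _)
  have ym : y * m * y⁻¹ = m := cj (D.yC_h hih _ _ _ _)
  have MF : M ∈ D.FU n FI.I FI.Gamma := TL_mem D hzk
  have X2F : X2 ∈ D.FU n FI.I FI.Gamma := TS_mem D (i := h) (j := Idx.neg k) hhk (FI.I.neg_mem hz.memI)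
  have mF : m ∈ D.FU n FI.I FI.Gamma := TL_mem D hz
  have NG : N ∈ D.FU n FJ.I FJ.Gamma := TL_mem D (hb.congr (by simp [Idx.neg, hs]))
  have X3G : y * X3 * y⁻¹ ∈ D.FU n FJ.I FJ.Gamma := by
    have : X3 = D.TS (Idx.neg h) k (-D.st (Idx.neg k) h b) := by
      rw [hX3, TS_symm D (i := Idx.neg k) (j := h) (nf hhk.symm), Idx.neg_neg]
    have hd : -D.st (Idx.neg k) h b ∈ FJ.I := neg_mem (st_mem FJ _ _ hb.memI)
    rw [this]
    refine D.yE hih hik hhk _ _ _ _ hρ _ (fun α e hα => TS_mem D hα (FJ.mul_mem_left _ _ hd)) ?_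
    intro β hβ
    exact TL_mem D (hβ.conj' k _ fun g hg => min_mem FJ (st_mem FJ _ _ hd) hg)
  have UH : y * U * y⁻¹ ∈ ⁅D.FU n FI.I FI.Gamma, D.FU n FJ.I FJ.Gamma⁆ := by
    have hw : -z ∈ FI.I := FI.I.neg_mem hz.memI
    refine D.yE (k := Idx.neg k) hih hik hhk _ _ _ _ hρ _ ?_ ?_
    · intro α e hα
      rw [← mul_assoc]
      exact H_JI FI FJ hn hα hw (FJ.mul_mem_left _ _ hb.memI)
    · intro β hβ
      refine H_L FI FJ hn (hβ.conj' _ _ ?_)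
      intro g hg
      refine AddSubgroup.subset_closure ⟨D.lpow ((Idx.eps (Idx.neg k) - Idx.eps (Idx.neg h)) / 2) *
        D.bar (-z), FI.mul_mem_left _ _ (FI.bar_mem _ hw), D.bar b * g * D.bar (D.bar b),
        min_mem FJ (FJ.bar_mem _ hb.memI) hg, ?_⟩
      rw [st, D.bar_mul b (-z), ← mul_assoc, D.bar_mul _ (D.bar b)]
      simp only [mul_assoc]
  have LH : L ∈ ⁅D.FU n FI.I FI.Gamma, D.FU n FJ.I FJ.Gamma⁆ := by
    have hw : -z ∈ FI.I := FI.I.neg_mem hz.memI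
    refine H_L FI FJ hn (Lv.neg ?_)
    have := hb.conj' (Γ' := D.conjPar FI.I FJ.Gamma) (Idx.neg k) (-z) (fun g hg =>
      AddSubgroup.subset_closure ⟨_, st_mem FI _ _ hw, g, hg, rfl⟩)
    simpa only [Idx.neg_neg] using this
  -- commutator with V
  have a1 : ⁅q * M * q⁻¹, t⁆ = ⁅q * M * q⁻¹, N⁻¹ * X3⁻¹⁆ := by
    have hV : N⁻¹ * X3⁻¹ = t * (q * t * q⁻¹)⁻¹ := by
      have c : Commute t (N⁻¹ * X3⁻¹) := cNt.symm.inv_right.mul_right cXt.symm.inv_right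
      rw [e2]
      calc N⁻¹ * X3⁻¹ = (t * (N⁻¹ * X3⁻¹)) * t⁻¹ := by rw [c.eq]; group
        _ = _ := by group
    rw [hV]
    simp only [commutatorElement_def]
    calc q * M * q⁻¹ * t * (q * M * q⁻¹)⁻¹ * t⁻¹
        = q * M * q⁻¹ * t * q * (M⁻¹) * q⁻¹ * t⁻¹ := by group
      _ = q * M * q⁻¹ * t * q * (t⁻¹ * M⁻¹ * t⁻¹⁻¹) * q⁻¹ * t⁻¹ := by
        rw [cj (cMt.symm.inv_left.inv_right)]
      _ = _ := by group
  have a2 : ⁅t, X2⁆ = U * L := by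
    rw [commutatorElement_def, e3, mul_assoc U, cXL.eq]; group
  have a3 : ⁅m, t⁆ = (M * X2)⁻¹ * ⁅q * M * q⁻¹, N⁻¹ * X3⁻¹⁆ * (M * (U * L) * M⁻¹) * (M * X2) := by
    rw [← a1, ← a2, e1]
    simp only [commutatorElement_def]
    symm
    calc _ = m * t * m⁻¹ * X2⁻¹ * (M⁻¹ * (t⁻¹ * M * t⁻¹⁻¹)) * X2 * t⁻¹ := by group
      _ = _ := by rw [cj cMt.symm.inv_left]; group
  have ycm : ∀ a b : GLn A n, y * ⁅a, b⁆ * y⁻¹ = ⁅y * a * y⁻¹, y * b * y⁻¹⁆ := fun a b => by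
    simp only [commutatorElement_def]; group
  have yinv : ∀ a : GLn A n, y * a⁻¹ * y⁻¹ = (y * a * y⁻¹)⁻¹ := fun a => by group
  rw [a3, e1]
  have e : ∀ P Q R : GLn A n, P⁻¹ * Q * (M * R * M⁻¹) * P =
      P⁻¹ * (Q * (M * R * M⁻¹)) * P⁻¹⁻¹ := fun P Q R => by group
  rw [e]
  simp only [cmul y, ycm, yinv, yM, yN, yL, yX2, ym]
  exact comm_conj_left _ _ (inv_mem (mul_mem MF X2F)) (mul_mem
    (Subgroup.commutator_mem_commutator (mul_mem (mul_mem MF X2F) mF)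
      (mul_mem (inv_mem NG) (inv_mem X3G)))
    (comm_conj_left _ _ MF (mul_mem UH LH)))

end FormRingData

namespace FormRingData

variable {A : Type*} [Ring A] {n : ℕ}
variable {D : FormRingData A} (FI FJ : FormIdeal D)

/-- first step -/
theorem key1 (hn : 3 ≤ n) {i h k : Idx n} (hih : h.1 ≠ i.1) (hik : i.1 ≠ k.1)
    (hhk : h.1 ≠ k.1) (hs : h.2 = k.2) (ρ σ ρ' : A) (hρ : D.Lv D.Lambda h ρ') (a b : A)
    (ha : D.Lv FI.Gamma (Idx.neg i) a) (hb : D.Lv FJ.Gamma (Idx.neg h) b) :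
    ⁅D.TL (Idx.neg i) a, D.yy i h ρ σ ρ' * D.TL (Idx.neg h) b * (D.yy i h ρ σ ρ')⁻¹⁆ ∈
      ⁅D.FU n FI.I FI.Gamma, D.FU n FJ.I FJ.Gamma⁆ := by
  have hx : -ρ * a ∈ FI.I := FI.mul_mem_left _ _ ha.memI
  have e1 := D.yA' hih ρ σ ρ' a (ha.mono FI.gamma_le_Lambda)
  have hm : D.Lv FI.Gamma h (-ρ * a * D.st h (Idx.neg i) (-ρ)) :=
    ha.conj h (-ρ) (fun g hg => FI.gamma_conj _ _ hg)
  have k2 := key2 FI FJ hn hih hik hhk hs ρ σ ρ' hρ _ b hm hb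
  have hys := D.yG hih ρ σ ρ' (-ρ * a) hx
  have hyu : D.yy i h ρ σ ρ' * D.TL (Idx.neg i) a * (D.yy i h ρ σ ρ')⁻¹ ∈
      D.FU n FI.I FI.Gamma := by
    rw [D.yA hih ρ σ ρ' a (ha.mono FI.gamma_le_Lambda)]
    exact mul_mem (mul_mem (TL_mem D ha) (TS_mem D hih (FI.mul_mem_left _ _ ha.memI)))
      (TL_mem D (ha.conj h ρ (fun g hg => FI.gamma_conj _ _ hg)))
  have e3 := D.S5c (h := Idx.neg h) (k := i) b (-ρ * a) (nf hih) (nf hih)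
    (hb.mono FJ.gamma_le_Lambda).st_eq
  rw [Idx.neg_neg] at e3
  generalize -ρ * a = x at *
  generalize x * D.st h (Idx.neg i) (-ρ) = z at *
  have hc : D.Lv (D.conjPar FI.I FJ.Gamma) (Idx.neg i) (-(D.st h i x * b * x)) := by
    refine Lv.neg ?_
    have := hb.conj' (Γ' := D.conjPar FI.I FJ.Gamma) i x (fun g hg =>
      AddSubgroup.subset_closure ⟨_, st_mem FI _ _ hx, g, hg, rfl⟩)
    simpa only [Idx.neg_neg] using this
  have hcy : D.yy i h ρ σ ρ' * D.TL (Idx.neg i) (-(D.st h i x * b * x)) * (D.yy i h ρ σ ρ')⁻¹ ∈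
      ⁅D.FU n FI.I FI.Gamma, D.FU n FJ.I FJ.Gamma⁆ := by
    rw [D.yA hih ρ σ ρ' _ (hc.mono (conjPar_le FI FJ))]
    refine mul_mem (mul_mem (H_L FI FJ hn hc) ?_) (H_L FI FJ hn (hc.conj h ρ
      (fun g hg => conjPar_conj FI FJ _ hg)))
    have : ρ * -(D.st h i x * b * x) = (-(ρ * D.st h i x) * b) * x := by
      simp only [mul_neg, neg_mul, mul_assoc]
    rw [this]
    exact H_JI FI FJ hn hih hx (FJ.mul_mem_left _ _ hb.memI)
  have hUy : D.yy i h ρ σ ρ' * D.TS (Idx.neg h) i (b * x) * (D.yy i h ρ σ ρ')⁻¹ ∈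
      ⁅D.FU n FI.I FI.Gamma, D.FU n FJ.I FJ.Gamma⁆ := by
    have e := D.S3 (i := Idx.neg h) (j := k) (k := i) b x (nf hhk) (nf hhk) (nf hik.symm)
      (nf hik.symm) (nf hih) (nf hih)
    have e' : D.TS (Idx.neg h) i (b * x) = ⁅D.TS (Idx.neg h) k b, D.TS k i x⁆ := by
      rw [commutatorElement_def, e]; group
    have ycm : ∀ y a b : GLn A n, y * ⁅a, b⁆ * y⁻¹ = ⁅y * a * y⁻¹, y * b * y⁻¹⁆ :=
      fun y a b => by simp only [commutatorElement_def]; group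
    rw [e', ycm, Subgroup.commutator_comm]
    refine Subgroup.commutator_mem_commutator ?_ (D.yF hih hik hhk _ _ _ _ hx)
    refine D.yE hih hik hhk _ _ _ _ hρ _
      (fun α e hα => TS_mem D hα (FJ.mul_mem_left _ _ hb.memI)) ?_
    intro β hβ
    exact TL_mem D (hβ.conj' k _ fun g hg => min_mem FJ (st_mem FJ _ _ hb.memI) hg)
  have cut : Commute (D.TL (Idx.neg i) a) (D.TL (Idx.neg h) b) :=
    D.comm_LL (i := Idx.neg i) (k := Idx.neg h) _ _ (nf hih.symm)
  have csc : Commute (D.TS h i x) (D.TL (Idx.neg i) (-(D.st h i x * b * x))) :=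
    D.comm_SL (i := h) (j := i) (k := Idx.neg i) _ _ (nf hih) (Idx.neg_ne i).symm (nf hih)
  set y := D.yy i h ρ σ ρ'
  set t := D.TL (Idx.neg h) b
  set u := D.TL (Idx.neg i) a
  set s := D.TS h i x
  set m := D.TL h z
  set c := D.TL (Idx.neg i) (-(D.st h i x * b * x))
  set U := D.TS (Idx.neg h) i (b * x)
  have hst : ⁅s, t⁆ = (U * c)⁻¹ := by
    have : ⁅t, s⁆ = U * c := by
      rw [commutatorElement_def, e3, mul_assoc U, csc.eq]; group
    rw [← this, commutatorElement_inv]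
  have hyst : y * ⁅s, t⁆ * y⁻¹ ∈ ⁅D.FU n FI.I FI.Gamma, D.FU n FJ.I FJ.Gamma⁆ := by
    have : y * (U * c)⁻¹ * y⁻¹ = ((y * U * y⁻¹) * (y * c * y⁻¹))⁻¹ := by group
    rw [hst, this]
    exact inv_mem (mul_mem hUy hcy)
  have f1 : ⁅u, y * t * y⁻¹⁆ = y * ⁅y⁻¹ * u * y, t⁆ * y⁻¹ := by
    simp only [commutatorElement_def]; group
  have f2 : y * ⁅u * s * m, t⁆ * y⁻¹ = (y * u * y⁻¹) * (((y * s * y⁻¹) * (y * ⁅m, t⁆ * y⁻¹) *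
      (y * s * y⁻¹)⁻¹) * (y * ⁅s, t⁆ * y⁻¹)) * (y * u * y⁻¹)⁻¹ := by
    simp only [commutatorElement_def]
    calc _ = y * u * s * m * t * m⁻¹ * s⁻¹ * (u⁻¹ * t⁻¹ * u⁻¹⁻¹) * u⁻¹ * y⁻¹ := by group
      _ = _ := by rw [cj cut.inv_left.inv_right]; group
  rw [f1, e1, f2]
  exact comm_conj_left _ _ hyu (mul_mem (comm_conj_left _ _ hys k2) hyst)

end FormRingData

/-- Lemma 9: `[T_{−i,i}(a), Z_{−i,i}(b,r)] ∈ [FU(2n,I,Γ), FU(2n,J,Δ)]` for long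
root positions, `1 ≤ i ≤ n`, `a ∈ Γ`, `b ∈ Δ`, `r ∈ Λ`. -/
theorem statement12 {A : Type*} [Ring A] (D : FormRingData A) (n : ℕ) (hn : 3 ≤ n)
    (FI FJ : FormIdeal D) (i : Idx n) (hi : i.2 = true)
    (a : A) (ha : a ∈ FI.Gamma) (b : A) (hb : b ∈ FJ.Gamma)
    (r : A) (hr : r ∈ D.Lambda) :
    ⁅D.TL (Idx.neg i) a,
        D.TL i (D.lpow (-(Idx.eps i + 1) / 2) * r) * D.TL (Idx.neg i) b *
          D.TL i (-(D.lpow (-(Idx.eps i + 1) / 2) * r))⁆ ∈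
      ⁅D.FU n FI.I FI.Gamma, D.FU n FJ.I FJ.Gamma⁆ := by

  obtain ⟨c, hc, -⟩ := FormRingData.third hn i.1 i.1
  obtain ⟨c', hc1, hc2⟩ := FormRingData.third hn i.1 c
  have hih : ((c, true) : Idx n).1 ≠ i.1 := hc
  have hik : i.1 ≠ ((c', true) : Idx n).1 := hc1.symm
  have hhk : ((c, true) : Idx n).1 ≠ ((c', true) : Idx n).1 := hc2.symm
  have hh : ((c, true) : Idx n).2 = true := rfl
  have hs : ((c, true) : Idx n).2 = ((c', true) : Idx n).2 := rfl
  generalize ((c, true) : Idx n) = h at *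
  generalize ((c', true) : Idx n) = k at *
  rw [← FormRingData.TL_inv]
  have hβ : D.Lv D.Lambda i (D.lpow (-(Idx.eps i + 1) / 2) * r) := ⟨r, hr, rfl⟩
  generalize D.lpow (-(Idx.eps i + 1) / 2) * r = β at *
  have ha' : D.Lv FI.Gamma (Idx.neg i) a :=
    ⟨a, ha, by rw [FormRingData.lp_f _ _ (by simp [Idx.neg, hi]), one_mul]⟩
  have hb' : D.Lv FJ.Gamma (Idx.neg h) b :=
    ⟨b, hb, by rw [FormRingData.lp_f _ _ (by simp [Idx.neg, hh]), one_mul]⟩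
  have hbI : b ∈ FJ.I := FJ.gamma_le_I hb
  have e1 := D.S5a (i := Idx.neg i) (j := Idx.neg h) 1 b (FormRingData.nf hih.symm)
    (FormRingData.nf hih.symm) (hb'.mono FJ.gamma_le_Lambda).st_eq
  rw [FormRingData.st_same _ _ _ (by simp [Idx.neg, hh, hi]), FormRingData.bar_one, one_mul,
    mul_one, Idx.neg_neg] at e1
  have e2 := D.S5c (h := i) (k := Idx.neg h) β 1 (FormRingData.nf hih.symm)
    (FormRingData.nf hih.symm) hβ.st_eq
  have hρ : D.Lv D.Lambda (Idx.neg (Idx.neg h)) (-(D.st (Idx.neg i) (Idx.neg h) 1 * β * 1)) :=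
    (hβ.conj' (Idx.neg h) 1 (fun g hg => D.lambda_conj _ _ hg)).neg
  rw [Idx.neg_neg] at hρ e2
  have e3 := D.S5c (h := i) (k := h) β (-b) (FormRingData.nf hih.symm)
    (FormRingData.nf hih.symm) hβ.st_eq
  have hA : D.TL i β * (D.TS (Idx.neg i) h b)⁻¹ * (D.TL i β)⁻¹ * (D.TL (Idx.neg h) b)⁻¹ ∈
      D.FU n FJ.I FJ.Gamma := by
    have hnb : -b ∈ FJ.I := FJ.I.neg_mem hbI
    rw [FormRingData.TS_inv, e3]
    refine mul_mem (mul_mem (mul_mem (FormRingData.TS_mem D hih.symm (FJ.mul_mem_left _ _ hnb))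
      (FormRingData.TS_mem D (i := Idx.neg i) (j := h) hih.symm hnb))
      (FormRingData.TL_mem D (FormRingData.Lv.neg
        (hβ.conj' h _ fun g hg => FormRingData.min_mem FJ (FormRingData.st_mem FJ _ _ hnb) hg))))
      (inv_mem (FormRingData.TL_mem D hb'))
  have s1 := FormRingData.TS_symm D (i := i) (j := Idx.neg h) (FormRingData.nf hih.symm) (β * 1)
  have s2 := FormRingData.TS_symm D (i := Idx.neg i) (j := Idx.neg h)
    (FormRingData.nf hih.symm) (1 : A)
  have key := FormRingData.key1 FI FJ hn hih hik hhk hs (-D.st i (Idx.neg h) (β * 1))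
    (-D.st (Idx.neg i) (Idx.neg h) 1) _ hρ a b ha' hb'
  have cgt : Commute (D.TL i β) (D.TL (Idx.neg h) b) :=
    D.comm_LL (i := i) (k := Idx.neg h) _ _ (FormRingData.nf hih.symm)
  rw [Idx.neg_neg] at s1 s2
  rw [Idx.neg_neg] at s2
  rw [FormRingData.yy, ← s1, ← s2, ← e2] at key
  have hu : D.TL (Idx.neg i) a ∈ D.FU n FI.I FI.Gamma := FormRingData.TL_mem D ha'
  generalize D.TL (Idx.neg i) a = u at *
  generalize D.TL (Idx.neg i) b = τ at *
  generalize D.TL (Idx.neg h) b = t at *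
  generalize D.TS (Idx.neg i) (Idx.neg h) 1 = p at *
  generalize D.TS (Idx.neg i) h b = X at *
  generalize D.TL i β = g at *
  have f1 : g * τ * g⁻¹ = (g * X⁻¹ * g⁻¹ * t⁻¹) *
      ((g * p * g⁻¹) * t * (g * p * g⁻¹)⁻¹) := by
    have : τ = X⁻¹ * t⁻¹ * (p * t * p⁻¹) := by rw [e1]; group
    calc g * τ * g⁻¹ = g * X⁻¹ * g⁻¹ * (g * t⁻¹ * g⁻¹) * g * p * g⁻¹ * (g * t * g⁻¹) * g * p⁻¹ * g⁻¹
          := by rw [this]; group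
      _ = _ := by
        rw [FormRingData.cj cgt.inv_right, FormRingData.cj cgt]; group
  have f2 : ∀ P Q : GLn A n, ⁅u, P * Q⁆ = ⁅u, P⁆ * (P * ⁅u, Q⁆ * P⁻¹) := fun P Q => by
    simp only [commutatorElement_def]; group
  rw [f1, f2]
  exact mul_mem (Subgroup.commutator_mem_commutator hu hA)
    (FormRingData.comm_conj_right _ _ hA key)
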